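/- arXiv:1307.2427 — 10 statements merged into one kernel-verified Lean document; each statement's English description precedes it below -/
import Mathlib

section
/- Let Λ = (χ, E, δ) be an automaton with inputs and let x̄ ∈ χ. There exists a synchronizing sequence for the state x̄ if and only if for every pair of states x', x'' ∈ χ there exists a word w ∈ E* such that δ(x', w) = x̄ and δ(x'', w) = x̄. -/
/-- Extension of the transition function of an automaton with inputs to words:
`deltaStar δ x w` is the state reached from `x` after applying the input word `w`. -/
def deltaStar {χ E : Type} (δ : χ → E → χ) (x : χ) (w : List E) : χ :=
  w.foldl δ x

theorem deltaStar_append {χ E : Type} (δ : χ → E → χ) (x : χ) (v w : List E) :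
    deltaStar δ x (v ++ w) = deltaStar δ (deltaStar δ x v) w :=
  List.foldl_append

/-- If every pair of states can be merged to `xbar`, then so can every finite set of states. -/
theorem exists_word_merging_finset {χ E : Type} (δ : χ → E → χ) (xbar : χ)
    (h : ∀ x' x'' : χ, ∃ w : List E, deltaStar δ x' w = xbar ∧ deltaStar δ x'' w = xbar)
    (s : Finset χ) : ∃ w : List E, ∀ x ∈ s, deltaStar δ x w = xbar := by
  classical
  induction s using Finset.induction_on with
  | empty => exact ⟨[], by simp⟩
  | insert a s _ ih =>
    obtain ⟨w, hw⟩ := ih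
    obtain ⟨v, hav, hv⟩ := h (deltaStar δ a w) xbar
    refine ⟨w ++ v, fun x hx => ?_⟩
    rw [deltaStar_append]
    rcases Finset.mem_insert.mp hx with rfl | hx
    · exact hav
    · rw [hw x hx, hv]

/-- There exists a synchronizing sequence for state `x̄` iff every pair of states
can be merged to `x̄` by some word. -/
theorem exists_SS_iff_pairwise_mergeable {χ E : Type} [Fintype χ] [Nonempty χ]
    [Fintype E] [Nonempty E] (δ : χ → E → χ) (xbar : χ) :
    (∃ w : List E, ∀ x : χ, deltaStar δ x w = xbar) ↔
      (∀ x' x'' : χ, ∃ w : List E,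
        deltaStar δ x' w = xbar ∧ deltaStar δ x'' w = xbar) := by
  constructor
  · rintro ⟨w, hw⟩ x' x''
    exact ⟨w, hw x', hw x''⟩
  · intro h
    obtain ⟨w, hw⟩ := exists_word_merging_finset δ xbar h Finset.univ
    exact ⟨w, fun x => hw x (Finset.mem_univ x)⟩
end

section
/- Let ⟨N, E, f⟩ be a deterministic synchronized Petri net and M₀ a marking such that the reachability set R = {M : ∃ w ∈ E*, M₀ →w M} is finite, and let M̄ ∈ R. Then there exists a word w̄ ∈ E* such that M →w̄ M̄ for every M ∈ R if and only if for every pair M₁, M₂ ∈ R there exists a word w ∈ E* with M₁ →w M̄ and M₂ →w M̄. -/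
open scoped Classical BigOperators

/-- A synchronized Petri net `⟨N, E, f⟩`: `Pre`/`Post` incidence functions
and a labeling `f` of transitions by input events. -/
structure SyncPN (P T E : Type) where
  Pre : P → T → ℕ
  Post : P → T → ℕ
  f : T → E

/-- A transition `t` is enabled at marking `M` if `M(p) ≥ Pre(p,t)` for all `p`. -/
def enabled {P T E : Type} (N : SyncPN P T E) (M : P → ℕ) (t : T) : Prop :=
  ∀ p, N.Pre p t ≤ M p

/-- Occurrence of input event `e` at marking `M`: all enabled transitions labeled `e`
fire simultaneously: `step M e (p) = M(p) + Σ Post(p,t) − Σ Pre(p,t)`,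
the sums ranging over enabled transitions labeled `e`. -/
noncomputable def step {P T E : Type} [Fintype T] (N : SyncPN P T E) (M : P → ℕ)
    (e : E) : P → ℕ := fun p =>
  M p + (∑ t : T, if N.f t = e ∧ enabled N M t then N.Post p t else 0)
      - ∑ t : T, if N.f t = e ∧ enabled N M t then N.Pre p t else 0

/-- Extension of `step` to input words: `M →w stepWord N M w`. -/
noncomputable def stepWord {P T E : Type} [Fintype T] (N : SyncPN P T E) (M : P → ℕ)
    (w : List E) : P → ℕ :=
  w.foldl (step N) M

/-- A net is deterministic if no place has two distinct output transitions
sharing the same label. -/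
def deterministic {P T E : Type} (N : SyncPN P T E) : Prop :=
  ∀ (p : P) (t t' : T), t ≠ t' → 1 ≤ N.Pre p t → 1 ≤ N.Pre p t' → N.f t ≠ N.f t'

/-- A state machine: each transition `t` has single input place `ins t`
and single output place `outs t`, with arc weight 1. -/
def isSM {P T E : Type} (N : SyncPN P T E) (ins outs : T → P) : Prop :=
  (∀ p t, N.Pre p t = if p = ins t then 1 else 0) ∧
  (∀ p t, N.Post p t = if p = outs t then 1 else 0)

/-- Strong connectedness of the associated graph of a state machine
(an arc from `ins t` to `outs t` for each transition `t`). -/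
def stronglyConnected {P T : Type} (ins outs : T → P) : Prop :=
  ∀ p p' : P, Relation.ReflTransGen (fun a b => ∃ t, ins t = a ∧ outs t = b) p p'

/-- Reading a concatenation amounts to reading its two parts in turn. -/
theorem stepWord_append {P T E : Type} [Fintype T] (N : SyncPN P T E) (M : P → ℕ)
    (v w : List E) : stepWord N M (v ++ w) = stepWord N (stepWord N M v) w :=
  List.foldl_append

/-- In a set of markings closed under input words, if any two markings can be driven to `Mbar`
by a common word, then so can all the markings of the set, provided it is finite. -/
theorem exists_common_word_of_pairwise {P T E : Type} [Fintype T] (N : SyncPN P T E)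
    {R : Set (P → ℕ)} (hclosed : ∀ M ∈ R, ∀ w : List E, stepWord N M w ∈ R)
    {Mbar : P → ℕ} (hMbar : Mbar ∈ R)
    (hpair : ∀ M₁ ∈ R, ∀ M₂ ∈ R, ∃ w : List E,
      stepWord N M₁ w = Mbar ∧ stepWord N M₂ w = Mbar)
    (hfin : R.Finite) : ∃ w : List E, ∀ M ∈ R, stepWord N M w = Mbar := by
  refine hfin.induction_on_subset (motive := fun S _ => ∃ w : List E, ∀ M ∈ S,
    stepWord N M w = Mbar) R ⟨[], by simp⟩ ?_
  rintro a S ha - - ⟨w, hw⟩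
  obtain ⟨v, hv, hv'⟩ := hpair _ (hclosed a ha w) Mbar hMbar
  refine ⟨w ++ v, ?_⟩
  rintro M (rfl | hM)
  · rw [stepWord_append, hv]
  · rw [stepWord_append, hw M hM, hv']

/-- For a deterministic synchronized Petri net with finite reachability set `R` and
`M̄ ∈ R`, a synchronizing sequence for `M̄` exists iff every pair of reachable
markings can be merged to `M̄` by some common input word. -/
theorem exists_SS_iff_pairwise_mergeable_PN {P T E : Type} [Fintype P] [Fintype T]
    [Fintype E] (N : SyncPN P T E) (hdet : deterministic N) (M0 : P → ℕ)
    (R : Set (P → ℕ)) (hR : R = {M | ∃ w : List E, stepWord N M0 w = M})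
    (hfin : R.Finite) (Mbar : P → ℕ) (hMbar : Mbar ∈ R) :
    (∃ w : List E, ∀ M ∈ R, stepWord N M w = Mbar) ↔
      (∀ M₁ ∈ R, ∀ M₂ ∈ R, ∃ w : List E,
        stepWord N M₁ w = Mbar ∧ stepWord N M₂ w = Mbar) := by
  constructor
  · rintro ⟨w, hw⟩ M₁ h₁ M₂ h₂
    exact ⟨w, hw M₁ h₁, hw M₂ h₂⟩
  · intro h
    have hclosed : ∀ M ∈ R, ∀ w : List E, stepWord N M w ∈ R := by
      subst hR
      rintro M ⟨v, rfl⟩ w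
      exact ⟨v ++ w, stepWord_append N M0 v w⟩
    exact exists_common_word_of_pairwise N hclosed hMbar h hfin
end

section
/- Let ⟨N, E, f⟩ be a deterministic synchronized state machine. Then for every marking M and every input event e ∈ E, the total token count is conserved: Σ_{p∈P} step(M, e)(p) = Σ_{p∈P} M(p). -/
open scoped Classical BigOperators

/-- In a deterministic net, the tokens withdrawn from a place by the occurrence of an event
never exceed the tokens it holds. -/
theorem sum_pre_le_marking {P T E : Type} [Fintype T] {N : SyncPN P T E}
    (hdet : deterministic N) (M : P → ℕ) (e : E) (p : P) :
    (∑ t : T, if N.f t = e ∧ enabled N M t then N.Pre p t else 0) ≤ M p := by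
  by_cases h : ∃ t, (N.f t = e ∧ enabled N M t) ∧ 1 ≤ N.Pre p t
  · obtain ⟨t, ht, hpre⟩ := h
    rw [Finset.sum_eq_single t]
    · rw [if_pos ht]
      exact ht.2 p
    · intro t' _ hne
      split_ifs with ht'
      · by_contra h0
        exact hdet p t' t hne (Nat.one_le_iff_ne_zero.mpr h0) hpre (ht'.1.trans ht.1.symm)
      · rfl
    · simp
  · rw [Finset.sum_eq_zero]
    · exact Nat.zero_le _
    · intro t _
      split_ifs with ht
      · by_contra h0
        exact h ⟨t, ht, Nat.one_le_iff_ne_zero.mpr h0⟩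
      · rfl

/-- In a state machine, firing any set of transitions produces as many tokens as it consumes. -/
theorem sum_post_eq_sum_pre {P T E : Type} [Fintype P] [Fintype T] {N : SyncPN P T E}
    {ins outs : T → P} (hSM : isSM N ins outs) (F : T → Prop)
    [DecidablePred F] :
    (∑ p : P, ∑ t : T, if F t then N.Post p t else 0) =
      ∑ p : P, ∑ t : T, if F t then N.Pre p t else 0 := by
  rw [Finset.sum_comm, Finset.sum_comm (s := (Finset.univ : Finset P))]
  refine Finset.sum_congr rfl fun t _ => ?_
  split_ifs <;> simp [hSM.1, hSM.2]

/-- In a deterministic synchronized state machine the total token count is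
conserved by the occurrence of any input event. -/
theorem token_count_conserved {P T E : Type} [Fintype P] [Fintype T]
    (N : SyncPN P T E) (ins outs : T → P) (hSM : isSM N ins outs)
    (hdet : deterministic N) :
    ∀ (M : P → ℕ) (e : E), ∑ p : P, step N M e p = ∑ p : P, M p := by
  intro M e
  have hstep : ∀ p, step N M e p +
      (∑ t : T, if N.f t = e ∧ enabled N M t then N.Pre p t else 0) =
      M p + ∑ t : T, if N.f t = e ∧ enabled N M t then N.Post p t else 0 := fun p =>
    Nat.sub_add_cancel ((sum_pre_le_marking hdet M e p).trans (Nat.le_add_right _ _))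
  have hsum := Finset.sum_congr (rfl : (Finset.univ : Finset P) = _) fun p _ => hstep p
  rw [Finset.sum_add_distrib, Finset.sum_add_distrib,
    sum_post_eq_sum_pre hSM fun t => N.f t = e ∧ enabled N M t] at hsum
  exact Nat.add_right_cancel hsum
end

section
/- Let N = (P, T, Pre, Post) be a strongly connected state machine with P nonempty, and let M₀ be a marking with Σ_{p∈P} M₀(p) = k. Then the reachability set under transition firings is exactly the set of all distributions of k tokens: R(N, M₀) = { M : P → ℕ | Σ_{p∈P} M(p) = k }. -/
open scoped Classical BigOperators

/-- One firing step of a Petri net with incidence functions `Pre`, `Post`: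
some enabled transition `t` fires, yielding `M' = M + Post(·,t) − Pre(·,t)`. -/
def fireStep {P T : Type} (Pre Post : P → T → ℕ) (M M' : P → ℕ) : Prop :=
  ∃ t : T, (∀ p, Pre p t ≤ M p) ∧ M' = fun p => M p + Post p t - Pre p t

/-- Reachability via finite firing sequences. -/
def reach {P T : Type} (Pre Post : P → T → ℕ) (M0 M : P → ℕ) : Prop :=
  Relation.ReflTransGen (fireStep Pre Post) M0 M

/-- Firing is monotone: the tokens of `X` may be added to both markings of a run. -/
lemma reach_add_right {P T : Type} {Pre Post : P → T → ℕ} {M M' : P → ℕ}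
    (h : reach Pre Post M M') (X : P → ℕ) : reach Pre Post (M + X) (M' + X) := by
  refine Relation.ReflTransGen.lift (· + X) ?_ _ _ h
  rintro A B ⟨t, ht, rfl⟩
  refine ⟨t, fun p => (ht p).trans (Nat.le_add_right _ _), funext fun p => ?_⟩
  have := ht p
  simp only [Pi.add_apply]
  omega

/-- In a state machine, firing `t` moves one token from its input to its output place. -/
lemma fireStep_iff_moveToken {P T : Type} {Pre Post : P → T → ℕ} {ins outs : T → P}
    (hPre : ∀ p t, Pre p t = if p = ins t then 1 else 0)
    (hPost : ∀ p t, Post p t = if p = outs t then 1 else 0) {M M' : P → ℕ} :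
    fireStep Pre Post M M' ↔
      ∃ (t : T) (N : P → ℕ), M = N + Pi.single (ins t) 1 ∧ M' = N + Pi.single (outs t) 1 := by
  constructor
  · rintro ⟨t, ht, rfl⟩
    refine ⟨t, fun p => M p - Pre p t, funext fun p => ?_, funext fun p => ?_⟩ <;>
    · have h := ht p
      simp only [hPre, hPost, Pi.add_apply, Pi.single_apply] at h ⊢
      omega
  · rintro ⟨t, N, rfl, rfl⟩
    refine ⟨t, fun p => ?_, funext fun p => ?_⟩ <;>
    · simp only [hPre, hPost, Pi.add_apply, Pi.single_apply]
      omega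

lemma exists_eq_add_single_of_sum_eq_succ {P : Type} [Fintype P] {M : P → ℕ} {k : ℕ}
    (h : ∑ p, M p = k + 1) :
    ∃ (a : P) (N : P → ℕ), M = N + Pi.single a 1 ∧ ∑ p, N p = k := by
  obtain ⟨a, -, ha⟩ := Finset.exists_ne_zero_of_sum_ne_zero (h.trans_ne k.succ_ne_zero)
  have hM : M = (M - Pi.single a 1) + Pi.single a 1 := by
    funext p
    by_cases hp : p = a
    · subst hp
      simp only [Pi.add_apply, Pi.sub_apply, Pi.single_eq_same]
      omega
    · simp [hp]
  refine ⟨a, M - Pi.single a 1, hM, ?_⟩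
  rw [hM] at h
  simpa only [Pi.add_apply, Finset.sum_add_distrib, Finset.sum_pi_single', Finset.mem_univ,
    if_true, Nat.add_right_cancel_iff] using h

/-- In a state machine the token count is invariant. -/
lemma sum_eq_of_reach {P T : Type} [Fintype P] {Pre Post : P → T → ℕ} {ins outs : T → P}
    (hPre : ∀ p t, Pre p t = if p = ins t then 1 else 0)
    (hPost : ∀ p t, Post p t = if p = outs t then 1 else 0) {M M' : P → ℕ}
    (h : reach Pre Post M M') : ∑ p, M' p = ∑ p, M p := by
  induction h with
  | refl => rfl
  | tail _ hstep ih =>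
    obtain ⟨t, N, rfl, rfl⟩ := (fireStep_iff_moveToken hPre hPost).1 hstep
    rw [← ih]
    simp [Finset.sum_add_distrib]

/-- A token can be moved along any path of the associated graph. -/
lemma reach_add_single {P T : Type} {Pre Post : P → T → ℕ} {ins outs : T → P}
    (hPre : ∀ p t, Pre p t = if p = ins t then 1 else 0)
    (hPost : ∀ p t, Post p t = if p = outs t then 1 else 0) {a b : P}
    (h : Relation.ReflTransGen (fun a b => ∃ t, ins t = a ∧ outs t = b) a b) (N : P → ℕ) :
    reach Pre Post (N + Pi.single a 1) (N + Pi.single b 1) := by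
  refine Relation.ReflTransGen.lift (fun a => N + Pi.single a 1) ?_ _ _ h
  rintro _ _ ⟨t, rfl, rfl⟩
  exact (fireStep_iff_moveToken hPre hPost).2 ⟨t, N, rfl, rfl⟩

/-- In a strongly connected state machine, markings with equal token counts are mutually
reachable. -/
lemma reach_of_sum_eq {P T : Type} [Fintype P] {Pre Post : P → T → ℕ} {ins outs : T → P}
    (hPre : ∀ p t, Pre p t = if p = ins t then 1 else 0)
    (hPost : ∀ p t, Post p t = if p = outs t then 1 else 0)
    (hsc : ∀ p p' : P,
      Relation.ReflTransGen (fun a b => ∃ t, ins t = a ∧ outs t = b) p p')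
    {k : ℕ} {M M' : P → ℕ} (hM : ∑ p, M p = k) (hM' : ∑ p, M' p = k) :
    reach Pre Post M M' := by
  induction k generalizing M M' with
  | zero =>
    obtain rfl : M = M' := by
      funext p
      simp only [Finset.sum_eq_zero_iff, Finset.mem_univ, forall_const] at hM hM'
      rw [hM, hM']
    exact Relation.ReflTransGen.refl
  | succ k ih =>
    obtain ⟨a, N, rfl, hN⟩ := exists_eq_add_single_of_sum_eq_succ hM
    obtain ⟨b, N', rfl, hN'⟩ := exists_eq_add_single_of_sum_eq_succ hM'
    exact (reach_add_single hPre hPost (hsc a b) N).trans (reach_add_right (ih hN hN') _)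

/-- For a strongly connected state machine with `k` tokens, the reachability set is
exactly the set of all distributions of the `k` tokens over the places. -/
theorem reach_set_eq_token_distributions {P T : Type} [Fintype P] [Fintype T]
    [Nonempty P] (Pre Post : P → T → ℕ) (ins outs : T → P)
    (hPre : ∀ p t, Pre p t = if p = ins t then 1 else 0)
    (hPost : ∀ p t, Post p t = if p = outs t then 1 else 0)
    (hsc : ∀ p p' : P,
      Relation.ReflTransGen (fun a b => ∃ t, ins t = a ∧ outs t = b) p p')
    (M0 : P → ℕ) (k : ℕ) (hk : ∑ p : P, M0 p = k) :
    {M : P → ℕ | reach Pre Post M0 M} = {M : P → ℕ | ∑ p : P, M p = k} := by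
  ext M
  exact ⟨fun h => (sum_eq_of_reach hPre hPost h).trans hk,
    fun h => reach_of_sum_eq hPre hPost hsc hk h⟩
end

section
/- Let ⟨N, E, f⟩ be a deterministic, strongly connected synchronized state machine and let σ = t₁ t₂ … t_r be a synchronizing transition sequence for P and p̄ ∈ P, with corresponding directed path ρ = ⟨p₀ t₁ p₁ … t_r p_r⟩, p̄ = p_r. Let w̄ = f(t₁) f(t₂) … f(t_r). Then w̄ is a 1-SS for the marking M̄ with M̄(p̄) = 1 and M̄(p) = 0 for p ≠ p̄: for every marking M with Σ_{p∈P} M(p) = 1 it holds M →w̄ M̄. -/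
open scoped Classical BigOperators

/-- The marking with a single token, in place `q`. -/
noncomputable def tokenAt {P : Type} (q : P) : P → ℕ := fun p => if p = q then 1 else 0

theorem exists_eq_tokenAt {P : Type} [Fintype P] {M : P → ℕ} (hM : ∑ p : P, M p = 1) :
    ∃ q, M = tokenAt q := by
  obtain ⟨q, -, hq⟩ : ∃ q ∈ Finset.univ, M q ≠ 0 :=
    Finset.exists_ne_zero_of_sum_ne_zero (by rw [hM]; exact one_ne_zero)
  have hsum := Finset.add_sum_erase Finset.univ M (Finset.mem_univ q)
  have hrest : ∑ p ∈ Finset.univ.erase q, M p = 0 := by omega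
  refine ⟨q, funext fun p => ?_⟩
  by_cases hp : p = q
  · subst hp
    simp only [tokenAt, if_true]
    omega
  · simpa [tokenAt, hp] using Finset.sum_eq_zero_iff.mp hrest p (by simp [hp])

theorem enabled_tokenAt_iff {P T E : Type} {N : SyncPN P T E} {ins outs : T → P}
    (hSM : isSM N ins outs) (q : P) (t : T) : enabled N (tokenAt q) t ↔ ins t = q := by
  constructor
  · intro h
    have := h (ins t)
    by_contra hne
    simp [hSM.1, tokenAt, hne] at this
  · rintro rfl p
    simp [hSM.1, tokenAt]

theorem step_tokenAt_of_ins {P T E : Type} [Fintype T] {N : SyncPN P T E} {ins outs : T → P}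
    (hSM : isSM N ins outs) (hdet : deterministic N) (t : T) :
    step N (tokenAt (ins t)) (N.f t) = tokenAt (outs t) := by
  have huniq : ∀ t', (N.f t' = N.f t ∧ enabled N (tokenAt (ins t)) t') ↔ t' = t := by
    intro t'
    rw [enabled_tokenAt_iff hSM]
    constructor
    · rintro ⟨hf, hin⟩
      by_contra hne
      exact hdet (ins t) t' t hne (by simp [hSM.1, hin]) (by simp [hSM.1]) hf
    · rintro rfl
      exact ⟨rfl, rfl⟩
  funext p
  simp only [step, huniq, Finset.sum_ite_eq', Finset.mem_univ, if_true, hSM.1, hSM.2, tokenAt]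
  omega

theorem step_tokenAt_of_forall_ne {P T E : Type} [Fintype T] {N : SyncPN P T E}
    {ins outs : T → P} (hSM : isSM N ins outs) {q : P} {e : E}
    (h : ∀ t, ins t = q → N.f t ≠ e) : step N (tokenAt q) e = tokenAt q := by
  have hnone : ∀ t, ¬(N.f t = e ∧ enabled N (tokenAt q) t) := by
    rintro t ⟨hf, hen⟩
    exact h t ((enabled_tokenAt_iff hSM q t).mp hen) hf
  funext p
  simp [step, hnone]

/-- While the word of a synchronizing transition sequence is read, the token is either at the
current place of the path or at a place the path has not visited yet. -/
theorem exists_stepWord_tokenAt {P T E : Type} [Fintype T]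
    {N : SyncPN P T E} {ins outs : T → P} (hSM : isSM N ins outs) (hdet : deterministic N)
    {r : ℕ} {ps : ℕ → P} {ts : ℕ → T}
    (hpath : ∀ i < r, ins (ts i) = ps i ∧ outs (ts i) = ps (i + 1))
    (hC1 : ∀ t' : T, (∀ i < r, ts i ≠ t') → ∀ i < r, N.f t' ≠ N.f (ts i))
    (hC2 : ∀ i k, i < k → k ≤ r → ps i = ps k →
      ∀ j, j + 1 < k → N.f (ts j) ≠ N.f (ts (k - 1))) (q : P) :
    ∀ j ≤ r, ∃ q', stepWord N (tokenAt q) ((List.range j).map fun i => N.f (ts i)) = tokenAt q' ∧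
      (q' = ps j ∨ ∀ i ≤ j, ps i ≠ q') := by
  intro j
  induction j with
  | zero =>
    intro _
    refine ⟨q, rfl, ?_⟩
    by_cases hq : q = ps 0
    · exact Or.inl hq
    · right
      intro i hi
      obtain rfl : i = 0 := by omega
      exact Ne.symm hq
  | succ j ih =>
    intro hj
    obtain ⟨q', hword, hq'⟩ := ih (by omega)
    have hsucc : stepWord N (tokenAt q) ((List.range (j + 1)).map fun i => N.f (ts i)) =
        step N (tokenAt q') (N.f (ts j)) := by
      rw [← hword]
      simp [stepWord, List.range_succ]
    rw [hsucc]
    rcases hq' with rfl | hnew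
    · refine ⟨ps (j + 1), ?_, Or.inl rfl⟩
      rw [← (hpath j hj).1, ← (hpath j hj).2, step_tokenAt_of_ins hSM hdet]
    by_cases hmove : ∃ t, ins t = q' ∧ N.f t = N.f (ts j)
    · obtain ⟨t, rfl, hf⟩ := hmove
      refine ⟨outs t, by rw [← hf, step_tokenAt_of_ins hSM hdet], ?_⟩
      obtain ⟨m, hm, rfl⟩ : ∃ m < r, ts m = t := by
        by_contra! hcon
        exact hC1 t hcon j hj hf
      have hjm : j < m := by
        by_contra! hle
        exact hnew m hle (hpath m hm).1.symm
      right
      intro i hi heq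
      rw [(hpath m hm).2] at heq
      exact hC2 i (m + 1) (by omega) hm heq j (by omega) hf.symm
    · push Not at hmove
      refine ⟨q', step_tokenAt_of_forall_ne hSM hmove, ?_⟩
      by_cases hq : q' = ps (j + 1)
      · exact Or.inl hq
      · right
        intro i hi
        rcases Nat.le_succ_iff.mp hi with hi | rfl
        · exact hnew i hi
        · exact Ne.symm hq

/-- Proposition 2: if `σ = ts 0 … ts (r-1)` is a synchronizing transition sequence
for `P` and `p̄` (with directed path `ps 0, ps 1, …, ps r` visiting all places,
ending at `p̄ = ps r`, satisfying conditions C1 and C2), then the word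
`f(t₁)…f(t_r)` is a 1-SS driving the single token to `p̄`. -/
theorem STS_gives_one_SS {P T E : Type} [Fintype P] [Fintype T]
    (N : SyncPN P T E) (ins outs : T → P)
    (hSM : isSM N ins outs) (hdet : deterministic N)
    (hsc : stronglyConnected ins outs)
    (r : ℕ) (ps : ℕ → P) (ts : ℕ → T) (pbar : P)
    (hpath : ∀ i < r, ins (ts i) = ps i ∧ outs (ts i) = ps (i + 1))
    (hvisit : ∀ p : P, ∃ i ≤ r, ps i = p)
    (hend : ps r = pbar)
    (hnotbar : ∀ i < r, ps i ≠ pbar)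
    (hC1 : ∀ t' : T, (∀ i < r, ts i ≠ t') → ∀ i < r, N.f t' ≠ N.f (ts i))
    (hC2 : ∀ i k, i < k → k ≤ r → ps i = ps k →
      ∀ j, j + 1 < k → N.f (ts j) ≠ N.f (ts (k - 1))) :
    ∀ M : P → ℕ, (∑ p : P, M p = 1) →
      stepWord N M ((List.range r).map fun i => N.f (ts i)) =
        fun p => if p = pbar then 1 else 0 := by
  intro M hM
  obtain ⟨q, rfl⟩ := exists_eq_tokenAt hM
  obtain ⟨q', hword, hq'⟩ := exists_stepWord_tokenAt hSM hdet hpath hC1 hC2 q r le_rfl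
  have hq : q' = pbar := by
    rcases hq' with h | hnew
    · exact h.trans hend
    · obtain ⟨i, hi, hpi⟩ := hvisit q'
      exact absurd hpi (hnew i hi)
  rw [hword, hq]
  rfl
end

section
/- Let ⟨N, E, f⟩ be a deterministic, strongly connected synchronized state machine and let σ = t₁ t₂ … t_r be a synchronizing transition sequence for P and p̄ ∈ P, with corresponding directed path ρ = ⟨p₀ t₁ p₁ … t_r p_r⟩, p̄ = p_r. For each i ∈ {1, …, r}, if M is a marking with exactly one token and M →(f(t₁)…f(t_i)) M', then M' places its token at some place p_j of the path with j ≥ i, i.e. there exists j with i ≤ j ≤ r such that M'(p_j) = 1 and M'(p) = 0 for p ≠ p_j. -/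
open scoped Classical BigOperators

/-- The marking with exactly one token, located at `q`. -/
noncomputable def singleToken {P : Type} (q : P) : P → ℕ := fun p => if p = q then 1 else 0

lemma exists_eq_singleToken {P : Type} [Fintype P] {M : P → ℕ} (hM : ∑ p : P, M p = 1) :
    ∃ q, M = singleToken q := by
  obtain ⟨q, -, hq⟩ : ∃ q ∈ Finset.univ, M q ≠ 0 :=
    Finset.exists_ne_zero_of_sum_ne_zero (by omega)
  have hsplit := Finset.add_sum_erase Finset.univ M (Finset.mem_univ q)
  have hrest : ∑ p ∈ Finset.univ.erase q, M p = 0 := by omega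
  refine ⟨q, funext fun p => ?_⟩
  by_cases hp : p = q
  · subst hp
    simp only [singleToken, if_true]
    omega
  · simpa [singleToken, hp] using
      Finset.sum_eq_zero_iff.mp hrest p (Finset.mem_erase.mpr ⟨hp, Finset.mem_univ p⟩)

lemma enabled_singleToken_iff {P T E : Type} {N : SyncPN P T E} {ins outs : T → P}
    (hSM : isSM N ins outs) (q : P) (t : T) :
    enabled N (singleToken q) t ↔ ins t = q := by
  simp only [enabled, singleToken, hSM.1]
  constructor
  · intro h
    by_contra hne
    simpa [hne] using h (ins t)
  · rintro rfl p
    exact le_rfl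

lemma step_singleToken_of_forall_ne {P T E : Type} [Fintype T] {N : SyncPN P T E}
    {ins outs : T → P} (hSM : isSM N ins outs) {q : P} {e : E}
    (h : ∀ t, ins t = q → N.f t ≠ e) :
    step N (singleToken q) e = singleToken q := by
  have hnot : ∀ t, ¬ (N.f t = e ∧ ins t = q) := fun t ht => h t ht.2 ht.1
  funext p
  simp [step, enabled_singleToken_iff hSM, hnot]

lemma step_singleToken_ins {P T E : Type} [Fintype T] {N : SyncPN P T E}
    {ins outs : T → P} (hSM : isSM N ins outs) (hdet : deterministic N) (t : T) :
    step N (singleToken (ins t)) (N.f t) = singleToken (outs t) := by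
  have huniq : ∀ t', (N.f t' = N.f t ∧ ins t' = ins t) ↔ t' = t := by
    refine fun t' => ⟨fun ⟨hf, hin⟩ => ?_, fun h => by simp [h]⟩
    by_contra hne
    exact hdet (ins t) t' t hne (by simp [hSM.1, hin]) (by simp [hSM.1]) hf
  funext p
  simp [step, enabled_singleToken_iff hSM, huniq, hSM.1, hSM.2, singleToken]

/-- After `i` events a single token either is synchronized with the path, at `ps i`, or lies at a
place that the path has not visited yet. Being unvisited, rather than merely being equal to some
`ps j` with `i ≤ j`, is what makes the induction go through. -/
lemma exists_stepWord_eq_singleToken {P T E : Type} [Fintype T]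
    {N : SyncPN P T E} {ins outs : T → P} (hSM : isSM N ins outs) (hdet : deterministic N)
    {r : ℕ} {ps : ℕ → P} {ts : ℕ → T}
    (hpath : ∀ i < r, ins (ts i) = ps i ∧ outs (ts i) = ps (i + 1))
    (hC1 : ∀ t' : T, (∀ i < r, ts i ≠ t') → ∀ i < r, N.f t' ≠ N.f (ts i))
    (hC2 : ∀ i k, i < k → k ≤ r → ps i = ps k →
      ∀ j, j + 1 < k → N.f (ts j) ≠ N.f (ts (k - 1))) (q : P) :
    ∀ i ≤ r, ∃ q', stepWord N (singleToken q) ((List.range i).map fun j => N.f (ts j)) =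
      singleToken q' ∧ (q' = ps i ∨ ∀ l ≤ i, ps l ≠ q') := by
  intro i
  induction i with
  | zero =>
    intro _
    refine ⟨q, by simp [stepWord], ?_⟩
    by_cases hq : q = ps 0
    · exact Or.inl hq
    · refine Or.inr fun l hl => ?_
      obtain rfl : l = 0 := by omega
      exact Ne.symm hq
  | succ i ih =>
    intro hi
    obtain ⟨x, hx, hinv⟩ := ih (by omega)
    have hstep : stepWord N (singleToken q) ((List.range (i + 1)).map fun j => N.f (ts j)) =
        step N (singleToken x) (N.f (ts i)) := by
      rw [← hx]
      simp [stepWord, List.range_succ]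
    rw [hstep]
    rcases hinv with rfl | hnew
    · refine ⟨ps (i + 1), ?_, Or.inl rfl⟩
      rw [← (hpath i hi).1, ← (hpath i hi).2]
      exact step_singleToken_ins hSM hdet (ts i)
    · by_cases hfire : ∃ t, ins t = x ∧ N.f t = N.f (ts i)
      · obtain ⟨t, rfl, hft⟩ := hfire
        obtain ⟨m, hm, rfl⟩ : ∃ m < r, ts m = t := by
          by_contra! hcon
          exact hC1 t hcon i hi hft
        have him : i < m := by
          by_contra! hle
          exact hnew m hle (hpath m hm).1.symm
        refine ⟨ps (m + 1), ?_, Or.inr fun l hl heq => ?_⟩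
        · rw [← hft, ← (hpath m hm).2]
          exact step_singleToken_ins hSM hdet (ts m)
        · exact hC2 l (m + 1) (by omega) hm heq i (by omega) hft.symm
      · push Not at hfire
        refine ⟨x, step_singleToken_of_forall_ne hSM hfire, ?_⟩
        by_cases hxi : x = ps (i + 1)
        · exact Or.inl hxi
        · refine Or.inr fun l hl => ?_
          rcases Nat.le_succ_iff.mp hl with hl | rfl
          · exact hnew l hl
          · exact Ne.symm hxi

/-- Inductive invariant in the proof of Proposition 2: after applying the first `i`
events `f(t₁)…f(t_i)` of a synchronizing transition sequence, a single token can
only be located at some place `ps j` of the path with `j ≥ i`. -/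
theorem STS_invariant {P T E : Type} [Fintype P] [Fintype T]
    (N : SyncPN P T E) (ins outs : T → P)
    (hSM : isSM N ins outs) (hdet : deterministic N)
    (hsc : stronglyConnected ins outs)
    (r : ℕ) (ps : ℕ → P) (ts : ℕ → T) (pbar : P)
    (hpath : ∀ i < r, ins (ts i) = ps i ∧ outs (ts i) = ps (i + 1))
    (hvisit : ∀ p : P, ∃ i ≤ r, ps i = p)
    (hend : ps r = pbar)
    (hnotbar : ∀ i < r, ps i ≠ pbar)
    (hC1 : ∀ t' : T, (∀ i < r, ts i ≠ t') → ∀ i < r, N.f t' ≠ N.f (ts i))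
    (hC2 : ∀ i k, i < k → k ≤ r → ps i = ps k →
      ∀ j, j + 1 < k → N.f (ts j) ≠ N.f (ts (k - 1))) :
    ∀ i, 1 ≤ i → i ≤ r → ∀ M M' : P → ℕ, (∑ p : P, M p = 1) →
      stepWord N M ((List.range i).map fun j => N.f (ts j)) = M' →
      ∃ j, i ≤ j ∧ j ≤ r ∧ M' = fun p => if p = ps j then 1 else 0 := by
  intro i _ hi M M' hM hM'
  obtain ⟨q, rfl⟩ := exists_eq_singleToken hM
  obtain ⟨q', hq', hinv⟩ := exists_stepWord_eq_singleToken hSM hdet hpath hC1 hC2 q i hi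
  rw [hq'] at hM'
  subst hM'
  rcases hinv with rfl | hnew
  · exact ⟨i, le_rfl, hi, rfl⟩
  · obtain ⟨j, hj, rfl⟩ := hvisit q'
    refine ⟨j, ?_, hj, rfl⟩
    by_contra! hlt
    exact hnew j hlt.le rfl
end

section
/- Let ⟨N, E, f⟩ be a deterministic, strongly connected synchronized state machine, let p̄ ∈ P, and let w ∈ E* be a 1-SS for p̄, i.e. every marking with exactly one token is driven by w to the marking M̄ with M̄(p̄) = 1 and 0 elsewhere. Suppose that no letter of w equals f(t) for any transition t with in(t) = p̄ (w contains no symbol labeling an output transition of p̄). Then for every k ≥ 1, w^k is a k-SS: every marking M with Σ_{p∈P} M(p) = k satisfies M →(w^k) M̄_k, where M̄_k(p̄) = k and M̄_k(p) = 0 for p ≠ p̄. -/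
open scoped Classical BigOperators

/-- The place reached by the moving token of a marked place `q` when event `e` occurs. -/
noncomputable def nextPlace {P T E : Type} (N : SyncPN P T E) (ins outs : T → P)
    (q : P) (e : E) : P :=
  if h : ∃ t, ins t = q ∧ N.f t = e then outs h.choose else q

theorem nextPlace_eq_self {P T E : Type} {N : SyncPN P T E} {ins outs : T → P} {q : P} {e : E}
    (h : ∀ t, ins t = q → N.f t ≠ e) : nextPlace N ins outs q e = q := by
  rw [nextPlace, dif_neg]
  rintro ⟨t, ht, hte⟩
  exact h t ht hte

theorem nextPlace_cases {P T E : Type} (N : SyncPN P T E) (ins outs : T → P) (q : P) (e : E) :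
    (∃ t, ins t = q ∧ N.f t = e ∧ nextPlace N ins outs q e = outs t) ∨
      ((∀ t, ins t = q → N.f t ≠ e) ∧ nextPlace N ins outs q e = q) := by
  by_cases h : ∃ t, ins t = q ∧ N.f t = e
  · exact Or.inl ⟨h.choose, h.choose_spec.1, h.choose_spec.2, by rw [nextPlace, dif_pos h]⟩
  · have h' : ∀ t, ins t = q → N.f t ≠ e := fun t ht hte => h ⟨t, ht, hte⟩
    exact Or.inr ⟨h', nextPlace_eq_self h'⟩

theorem eq_ite_of_sum_eq_of_le {P : Type} [Fintype P] {M : P → ℕ} {p : P} {k : ℕ}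
    (hsum : ∑ q : P, M q = k) (hp : k ≤ M p) : M = fun q => if q = p then k else 0 := by
  have h := Finset.add_sum_erase Finset.univ M (Finset.mem_univ p)
  have h0 : ∑ q ∈ Finset.univ.erase p, M q = 0 := by omega
  funext q
  by_cases hq : q = p
  · subst hq
    rw [if_pos rfl]
    omega
  · rw [if_neg hq]
    exact Finset.sum_eq_zero_iff.1 h0 q (Finset.mem_erase.2 ⟨hq, Finset.mem_univ q⟩)

section StateMachine

variable {P T E : Type} {N : SyncPN P T E} {ins outs : T → P}

theorem enabled_iff (hSM : isSM N ins outs) (M : P → ℕ) (t : T) :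
    enabled N M t ↔ 1 ≤ M (ins t) := by
  constructor
  · intro h
    simpa [hSM.1] using h (ins t)
  · intro h p
    rw [hSM.1]
    split_ifs with hp
    · exact hp ▸ h
    · exact Nat.zero_le _

variable [Fintype T]

theorem sum_pre_le (hSM : isSM N ins outs) (hdet : deterministic N) (M : P → ℕ) (e : E) (p : P) :
    (∑ t : T, if N.f t = e ∧ enabled N M t then N.Pre p t else 0) ≤ M p := by
  by_cases h : ∃ t, (N.f t = e ∧ enabled N M t) ∧ p = ins t
  · obtain ⟨t, ⟨hte, hen⟩, rfl⟩ := h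
    rw [Finset.sum_eq_single t]
    · rw [if_pos ⟨hte, hen⟩]
      exact hen _
    · intro t' _ hne
      by_cases ht' : N.f t' = e
      · by_cases hin : ins t = ins t'
        · refine absurd (hte.trans ht'.symm) (hdet (ins t) t t' hne.symm ?_ ?_)
          · simp [hSM.1]
          · simp [hSM.1, hin]
        · simp [hSM.1, hin]
      · simp [ht']
    · simp
  · rw [Finset.sum_eq_zero]
    · exact Nat.zero_le _
    · intro t _
      split_ifs with ht
      · rw [hSM.1, if_neg fun hp => h ⟨t, ht, hp⟩]
      · rfl

theorem step_add_sum_pre (hSM : isSM N ins outs) (hdet : deterministic N) (M : P → ℕ) (e : E)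
    (p : P) :
    step N M e p + (∑ t : T, if N.f t = e ∧ enabled N M t then N.Pre p t else 0) =
      M p + ∑ t : T, if N.f t = e ∧ enabled N M t then N.Post p t else 0 := by
  have := sum_pre_le hSM hdet M e p
  unfold step
  omega

theorem sum_step [Fintype P] (hSM : isSM N ins outs) (hdet : deterministic N) (M : P → ℕ)
    (e : E) : ∑ p, step N M e p = ∑ p, M p := by
  have h := Finset.sum_congr (rfl : (Finset.univ : Finset P) = Finset.univ)
    fun p _ => step_add_sum_pre hSM hdet M e p
  rw [Finset.sum_add_distrib, Finset.sum_add_distrib] at h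
  have hpp : (∑ p : P, ∑ t : T, if N.f t = e ∧ enabled N M t then N.Pre p t else 0) =
      ∑ p : P, ∑ t : T, if N.f t = e ∧ enabled N M t then N.Post p t else 0 := by
    rw [Finset.sum_comm, Finset.sum_comm (γ := P)]
    refine Finset.sum_congr rfl fun t _ => ?_
    split_ifs
    · simp [hSM.1, hSM.2]
    · simp
  omega

theorem sum_pre_eq_zero (hSM : isSM N ins outs) (M : P → ℕ) {e : E} {p : P}
    (h : ∀ t, ins t = p → N.f t ≠ e) :
    (∑ t : T, if N.f t = e ∧ enabled N M t then N.Pre p t else 0) = 0 := by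
  refine Finset.sum_eq_zero fun t _ => ?_
  split_ifs with ht
  · rw [hSM.1, if_neg fun hp => h t hp.symm ht.1]
  · rfl

theorem one_le_sum_post (hSM : isSM N ins outs) {M : P → ℕ} {t : T} (hM : 1 ≤ M (ins t)) :
    1 ≤ ∑ t' : T, if N.f t' = N.f t ∧ enabled N M t' then N.Post (outs t) t' else 0 := by
  refine le_trans ?_ (Finset.single_le_sum (fun _ _ => Nat.zero_le _) (Finset.mem_univ t))
  simp [hSM.2, (enabled_iff hSM M t).2 hM]

theorem one_le_step_nextPlace (hSM : isSM N ins outs) (hdet : deterministic N) {M : P → ℕ}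
    {q : P} (hq : 1 ≤ M q) (e : E) : 1 ≤ step N M e (nextPlace N ins outs q e) := by
  rcases nextPlace_cases N ins outs q e with ⟨t, rfl, rfl, h⟩ | ⟨hno, h⟩
  · rw [h]
    have h1 := one_le_sum_post hSM hq
    have h2 := step_add_sum_pre hSM hdet M (N.f t) (outs t)
    have h3 := sum_pre_le hSM hdet M (N.f t) (outs t)
    omega
  · rw [h]
    have h1 := sum_pre_eq_zero hSM M hno
    have h2 := step_add_sum_pre hSM hdet M e q
    omega

/-- A place without output transitions labeled `e` keeps its tokens, and gains one
if the moving token of another marked place reaches it. -/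
theorem le_step_of_no_output (hSM : isSM N ins outs) (hdet : deterministic N) {M : P → ℕ}
    {e : E} {p q : P} {c : ℕ} (hno : ∀ t, ins t = p → N.f t ≠ e) (hq : 1 ≤ M q)
    (hc : (c + if q = p then 1 else 0) ≤ M p) :
    (c + if nextPlace N ins outs q e = p then 1 else 0) ≤ step N M e p := by
  have h1 := sum_pre_eq_zero hSM M hno
  have h2 := step_add_sum_pre hSM hdet M e p
  by_cases hqp : q = p
  · subst hqp
    rw [nextPlace_eq_self hno]
    omega
  · rw [if_neg hqp] at hc
    rcases nextPlace_cases N ins outs q e with ⟨t, rfl, rfl, h⟩ | ⟨-, h⟩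
    · rw [h]
      split_ifs with hp
      · have h3 := one_le_sum_post hSM hq
        rw [hp] at h3
        omega
      · omega
    · rw [h, if_neg hqp]
      omega

theorem sum_stepWord [Fintype P] (hSM : isSM N ins outs) (hdet : deterministic N) (w : List E)
    (M : P → ℕ) : ∑ p, stepWord N M w p = ∑ p, M p := by
  induction w generalizing M with
  | nil => rfl
  | cons e w ih => exact (ih (step N M e)).trans (sum_step hSM hdet M e)

theorem one_le_stepWord_foldl_nextPlace (hSM : isSM N ins outs) (hdet : deterministic N)
    (w : List E) {M : P → ℕ} {q : P} (hq : 1 ≤ M q) :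
    1 ≤ stepWord N M w (w.foldl (nextPlace N ins outs) q) := by
  induction w generalizing M q with
  | nil => exact hq
  | cons e w ih => exact ih (one_le_step_nextPlace hSM hdet hq e)

theorem le_stepWord_of_no_output (hSM : isSM N ins outs) (hdet : deterministic N)
    {w : List E} {M : P → ℕ} {p q : P} {c : ℕ} (hno : ∀ e ∈ w, ∀ t, ins t = p → N.f t ≠ e)
    (hq : 1 ≤ M q) (hc : (c + if q = p then 1 else 0) ≤ M p) :
    (c + if w.foldl (nextPlace N ins outs) q = p then 1 else 0) ≤ stepWord N M w p := by
  induction w generalizing M q with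
  | nil => exact hc
  | cons e w ih =>
    exact ih (fun e' he' => hno e' (List.mem_cons_of_mem e he'))
      (one_le_step_nextPlace hSM hdet hq e)
      (le_step_of_no_output hSM hdet (hno e List.mem_cons_self) hq hc)

theorem foldl_nextPlace_eq [Fintype P] (hSM : isSM N ins outs) (hdet : deterministic N)
    {p : P} {w : List E}
    (h1SS : ∀ M : P → ℕ, (∑ q : P, M q = 1) → stepWord N M w = fun q => if q = p then 1 else 0)
    (q : P) : w.foldl (nextPlace N ins outs) q = p := by
  have h := one_le_stepWord_foldl_nextPlace hSM hdet w
    (M := fun x => if x = q then 1 else 0) (q := q) (by simp)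
  rw [h1SS _ (by simp)] at h
  by_contra hne
  simp [hne] at h

theorem min_le_stepWord [Fintype P] (hSM : isSM N ins outs) (hdet : deterministic N)
    {p : P} {w : List E}
    (h1SS : ∀ M : P → ℕ, (∑ q : P, M q = 1) → stepWord N M w = fun q => if q = p then 1 else 0)
    (hno : ∀ e ∈ w, ∀ t, ins t = p → N.f t ≠ e) (M : P → ℕ) :
    min (∑ q, M q) (M p + 1) ≤ stepWord N M w p := by
  by_cases h : ∃ q, q ≠ p ∧ 1 ≤ M q
  · obtain ⟨q, hqp, hq⟩ := h
    have := le_stepWord_of_no_output hSM hdet hno hq (c := M p) (by simp [hqp])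
    rw [foldl_nextPlace_eq hSM hdet h1SS q, if_pos rfl] at this
    exact (min_le_right _ _).trans this
  · have hM : ∑ q, M q = M p := by
      refine Finset.sum_eq_single p (fun q _ hqp => ?_) (by simp)
      by_contra h0
      exact h ⟨q, hqp, Nat.one_le_iff_ne_zero.2 h0⟩
    rw [hM]
    refine (min_le_left _ _).trans ?_
    rcases Nat.eq_zero_or_pos (M p) with h0 | hpos
    · rw [h0]
      exact Nat.zero_le _
    · have := le_stepWord_of_no_output hSM hdet hno hpos (c := M p - 1)
        (by rw [if_pos rfl]; omega)
      rw [foldl_nextPlace_eq hSM hdet h1SS p, if_pos rfl] at this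
      omega

theorem min_le_stepWord_replicate [Fintype P] (hSM : isSM N ins outs) (hdet : deterministic N)
    {p : P} {w : List E}
    (h1SS : ∀ M : P → ℕ, (∑ q : P, M q = 1) → stepWord N M w = fun q => if q = p then 1 else 0)
    (hno : ∀ e ∈ w, ∀ t, ins t = p → N.f t ≠ e) (n : ℕ) (M : P → ℕ) :
    min (∑ q, M q) (M p + n) ≤ stepWord N M (List.replicate n w).flatten p := by
  induction n generalizing M with
  | zero => exact min_le_right _ _
  | succ n ih =>
    have happ : stepWord N M (List.replicate (n + 1) w).flatten =
        stepWord N (stepWord N M w) (List.replicate n w).flatten := by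
      simp [stepWord, List.replicate_succ, List.foldl_append]
    have h1 := ih (stepWord N M w)
    have h2 := min_le_stepWord hSM hdet h1SS hno M
    rw [sum_stepWord hSM hdet] at h1
    rw [happ]
    omega

end StateMachine

/-- Proposition 4: if `w` is a 1-SS for `p̄` and no letter of `w` labels an output
transition of `p̄`, then `w^k` is a `k`-SS moving all `k` tokens to `p̄`. -/
theorem one_SS_pow_k_is_k_SS {P T E : Type} [Fintype P] [Fintype T]
    (N : SyncPN P T E) (ins outs : T → P)
    (hSM : isSM N ins outs) (hdet : deterministic N)
    (hsc : stronglyConnected ins outs)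
    (pbar : P) (w : List E)
    (h1SS : ∀ M : P → ℕ, (∑ p : P, M p = 1) →
      stepWord N M w = fun p => if p = pbar then 1 else 0)
    (hout : ∀ e ∈ w, ∀ t : T, ins t = pbar → N.f t ≠ e) :
    ∀ k : ℕ, 1 ≤ k → ∀ M : P → ℕ, (∑ p : P, M p = k) →
      stepWord N M ((List.replicate k w).flatten) =
        fun p => if p = pbar then k else 0 := by
  intro k _ M hM
  refine eq_ite_of_sum_eq_of_le ((sum_stepWord hSM hdet _ M).trans hM) ?_
  have h := min_le_stepWord_replicate hSM hdet h1SS hout k M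
  rw [hM] at h
  omega
end

section
/- Let ⟨N, E, f⟩ be a deterministic synchronized state machine and let S ⊆ P be a closed set of places, i.e. out(t) ∈ S whenever in(t) ∈ S. Then for every marking M and every input event e ∈ E: Σ_{p∈S} step(M, e)(p) ≥ Σ_{p∈S} M(p). -/
open scoped Classical BigOperators

/-- Subtraction in `step` is truncated, so this inequality needs no hypothesis on the net. -/
lemma marking_add_post_le_step_add_pre {P T E : Type} [Fintype T] (N : SyncPN P T E)
    (M : P → ℕ) (e : E) (p : P) :
    M p + (∑ t : T, if N.f t = e ∧ enabled N M t then N.Post p t else 0) ≤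
      step N M e p + ∑ t : T, if N.f t = e ∧ enabled N M t then N.Pre p t else 0 :=
  le_tsub_add

/-- In a state machine, a transition takes from a closed set of places at most as many tokens
as it puts into it. -/
lemma isSM.sum_pre_le_sum_post {P T E : Type} {N : SyncPN P T E} {ins outs : T → P}
    (hSM : isSM N ins outs) {S : Finset P} {t : T} (hclosed : ins t ∈ S → outs t ∈ S) :
    ∑ p ∈ S, N.Pre p t ≤ ∑ p ∈ S, N.Post p t := by
  simp only [hSM.1, hSM.2, Finset.sum_ite_eq']
  split_ifs <;> simp_all

/-- In a deterministic synchronized state machine, the token count in a closed set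
of places `S` (out(t) ∈ S whenever in(t) ∈ S) never decreases under any event. -/
theorem closed_set_tokens_monotone {P T E : Type} [Fintype P] [Fintype T]
    (N : SyncPN P T E) (ins outs : T → P)
    (hSM : isSM N ins outs) (hdet : deterministic N)
    (S : Finset P) (hclosed : ∀ t : T, ins t ∈ S → outs t ∈ S) :
    ∀ (M : P → ℕ) (e : E), ∑ p ∈ S, M p ≤ ∑ p ∈ S, step N M e p := by
  intro M e
  have hstep := Finset.sum_le_sum fun p (_ : p ∈ S) => marking_add_post_le_step_add_pre N M e p
  have hflow : ∑ p ∈ S, (∑ t : T, if N.f t = e ∧ enabled N M t then N.Pre p t else 0) ≤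
      ∑ p ∈ S, ∑ t : T, if N.f t = e ∧ enabled N M t then N.Post p t else 0 := by
    rw [Finset.sum_comm, Finset.sum_comm (s := S)]
    refine Finset.sum_le_sum fun t _ => ?_
    split_ifs
    · exact hSM.sum_pre_le_sum_post (hclosed t)
    · rfl
  rw [Finset.sum_add_distrib, Finset.sum_add_distrib] at hstep
  omega
end

section
/- Let ⟨N, E, f⟩ be a deterministic synchronized state machine whose associated graph has more than one ergodic component; in particular suppose there exist two disjoint nonempty closed sets of places S₁, S₂ ⊆ P (out(t) ∈ S_i whenever in(t) ∈ S_i, for i = 1, 2). Then for every k ≥ 1 there exist no word w̄ ∈ E* and marking M̄ such that M →w̄ M̄ for every marking M with Σ_{p∈P} M(p) = k. -/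
open scoped Classical BigOperators

/-- In a state machine, firing an event does not decrease the total number of tokens. -/
theorem sum_le_sum_step {P T E : Type} [Fintype P] [Fintype T] {N : SyncPN P T E}
    {ins outs : T → P} (hSM : isSM N ins outs) (M : P → ℕ) (e : E) :
    ∑ p, M p ≤ ∑ p, step N M e p := by
  have hPost_eq_Pre : (∑ p, ∑ t, if N.f t = e ∧ enabled N M t then N.Post p t else 0) =
      ∑ p, ∑ t, if N.f t = e ∧ enabled N M t then N.Pre p t else 0 := by
    rw [Finset.sum_comm, Finset.sum_comm (s := (Finset.univ : Finset P))]
    refine Finset.sum_congr rfl fun t _ => ?_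
    split_ifs <;> simp [hSM.1, hSM.2]
  have hstep : ∑ p, (M p + ∑ t, if N.f t = e ∧ enabled N M t then N.Post p t else 0) ≤
      ∑ p, (step N M e p + ∑ t, if N.f t = e ∧ enabled N M t then N.Pre p t else 0) :=
    Finset.sum_le_sum fun p _ => by unfold step; exact le_tsub_add
  rw [Finset.sum_add_distrib, Finset.sum_add_distrib, hPost_eq_Pre] at hstep
  exact Nat.le_of_add_le_add_right hstep

theorem sum_le_sum_stepWord {P T E : Type} [Fintype P] [Fintype T] {N : SyncPN P T E}
    {ins outs : T → P} (hSM : isSM N ins outs) (w : List E) (M : P → ℕ) :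
    ∑ p, M p ≤ ∑ p, stepWord N M w p := by
  induction w generalizing M with
  | nil => exact le_rfl
  | cons e w ih => exact (sum_le_sum_step hSM M e).trans (ih (step N M e))

/-- A marking supported on a closed set of places stays supported on it. -/
theorem step_eq_zero_of_notMem {P T E : Type} [Fintype T] {N : SyncPN P T E}
    {ins outs : T → P} (hSM : isSM N ins outs) {S : Finset P}
    (hclosed : ∀ t, ins t ∈ S → outs t ∈ S) {M : P → ℕ} (hM : ∀ p, p ∉ S → M p = 0)
    (e : E) (p : P) (hp : p ∉ S) : step N M e p = 0 := by
  have hPost : (∑ t, if N.f t = e ∧ enabled N M t then N.Post p t else 0) = 0 := by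
    refine Finset.sum_eq_zero fun t _ => ?_
    split_ifs with ht
    · have hins : ins t ∈ S := by
        by_contra hnot
        have hle := ht.2 (ins t)
        simp [hSM.1, hM _ hnot] at hle
      rw [hSM.2, if_neg]
      rintro rfl
      exact hp (hclosed t hins)
    · rfl
  simp [step, hPost, hM p hp]

theorem stepWord_eq_zero_of_notMem {P T E : Type} [Fintype T] {N : SyncPN P T E}
    {ins outs : T → P} (hSM : isSM N ins outs) {S : Finset P}
    (hclosed : ∀ t, ins t ∈ S → outs t ∈ S) (w : List E) {M : P → ℕ}
    (hM : ∀ p, p ∉ S → M p = 0) (p : P) (hp : p ∉ S) : stepWord N M w p = 0 := by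
  induction w generalizing M with
  | nil => exact hM p hp
  | cons e w ih => exact ih (step_eq_zero_of_notMem hSM hclosed hM e)

/-- Proposition 5: a deterministic synchronized state machine with two disjoint
nonempty closed sets of places (in particular, more than one ergodic component)
admits no synchronizing sequence, for any number `k ≥ 1` of tokens. -/
theorem no_SS_two_ergodic {P T E : Type} [Fintype P] [Fintype T]
    (N : SyncPN P T E) (ins outs : T → P)
    (hSM : isSM N ins outs) (hdet : deterministic N)
    (S₁ S₂ : Finset P) (hS₁ : S₁.Nonempty) (hS₂ : S₂.Nonempty)
    (hdisj : Disjoint S₁ S₂)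
    (hclosed₁ : ∀ t : T, ins t ∈ S₁ → outs t ∈ S₁)
    (hclosed₂ : ∀ t : T, ins t ∈ S₂ → outs t ∈ S₂) :
    ∀ k : ℕ, 1 ≤ k →
      ¬ ∃ (w : List E) (Mbar : P → ℕ),
          ∀ M : P → ℕ, (∑ p : P, M p = k) → stepWord N M w = Mbar := by
  rintro k hk ⟨w, Mbar, hw⟩
  have hsupp : ∀ S : Finset P, S.Nonempty → (∀ t, ins t ∈ S → outs t ∈ S) →
      k ≤ ∑ p, Mbar p ∧ ∀ p, p ∉ S → Mbar p = 0 := by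
    rintro S ⟨q, hq⟩ hclosed
    have hsum : ∑ p, (Pi.single q k : P → ℕ) p = k := by simp
    rw [← hw _ hsum]
    refine ⟨hsum.symm.le.trans (sum_le_sum_stepWord hSM w _),
      stepWord_eq_zero_of_notMem hSM hclosed w fun p hp => ?_⟩
    simp [(ne_of_mem_of_not_mem hq hp).symm]
  obtain ⟨hle, hzero₁⟩ := hsupp S₁ hS₁ hclosed₁
  obtain ⟨-, hzero₂⟩ := hsupp S₂ hS₂ hclosed₂
  have hzero : ∑ p, Mbar p = 0 := Finset.sum_eq_zero fun p _ => by
    by_cases hp : p ∈ S₁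
    · exact hzero₂ p (Finset.disjoint_left.mp hdisj hp)
    · exact hzero₁ p hp
  omega
end

section
/- Let ⟨N, E, f⟩ be a deterministic synchronized Petri net with P = Ps ⊎ Pz and T = Ts ⊎ Tz, such that every t ∈ Ts has exactly one input place ins(t) ∈ Ps and one output place outs(t) ∈ Ps with Pre(ins(t), t) = Post(outs(t), t) = 1 and Pre(p, t) = Post(p, t) = 0 for all other p ∈ Ps, and such that every t ∈ Tz satisfies Pre(p, t) = Post(p, t) = 0 for all p ∈ Ps (condition i). Let Ns be the synchronized state machine with places Ps, transitions Ts, input place ins, output place outs and labeling f restricted to Ts. Let e ∈ E be an event such that no t ∈ Ts with f(t) = e has an input place in Pz, i.e. Pre(p, t) = 0 for all p ∈ Pz whenever t ∈ Ts and f(t) = e (condition ii). Then for every marking M of N and every p ∈ Ps: step_N(M, e)(p) = step_{Ns}(M|_{Ps}, e)(p), where M|_{Ps} denotes the restriction of M to Ps. -/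
open scoped Classical BigOperators

/-- The synchronized state machine `Ns` induced by a state machine subnet
`(Ps, Ts)` with input place map `ins`, output place map `outs` and labeling `f`. -/
noncomputable def subSM {P T E : Type} (Ps : Finset P) (Ts : Finset T)
    (ins outs : T → P) (f : T → E) :
    SyncPN {p // p ∈ Ps} {t // t ∈ Ts} E where
  Pre := fun q t => if (q : P) = ins t then 1 else 0
  Post := fun q t => if (q : P) = outs t then 1 else 0
  f := fun t => f t

/-- A sum over `T` of a function supported on `s` equals a sum over the subtype `s`. -/
theorem Finset.sum_univ_eq_sum_subtype_of_eq_zero {T : Type} [Fintype T] (s : Finset T)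
    (g : T → ℕ) (h : {t // t ∈ s} → ℕ) (hz : ∀ t ∉ s, g t = 0)
    (hgh : ∀ t : {t // t ∈ s}, g t = h t) :
    ∑ t, g t = ∑ t, h t := by
  rw [← Finset.sum_subset (Finset.subset_univ s) fun t _ ht => hz t ht,
    ← Finset.sum_coe_sort s g]
  exact Finset.sum_congr rfl fun t _ => hgh t

/-- A transition of the subnet without input places outside `Ps` is enabled in `N` iff
it is enabled in the isolated state machine. -/
theorem enabled_iff_enabled_subSM {P T E : Type} (N : SyncPN P T E)
    (Ps : Finset P) (Ts : Finset T) (ins outs : T → P)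
    (hPre : ∀ t ∈ Ts, ∀ p ∈ Ps, N.Pre p t = if p = ins t then 1 else 0)
    (M : P → ℕ) (t : {t // t ∈ Ts}) (ht : ∀ p ∉ Ps, N.Pre p t = 0) :
    enabled N M t ↔ enabled (subSM Ps Ts ins outs N.f) (fun q => M q) t := by
  constructor
  · intro h q
    exact (hPre t t.2 q q.2).symm.trans_le (h q)
  · intro h p
    by_cases hp : p ∈ Ps
    · exact (hPre t t.2 p hp).trans_le (h ⟨p, hp⟩)
    · simp [ht p hp]

/-- One-step version of Proposition 7: under conditions i) and ii), the state
machine subnet evolves in the full net `N` exactly as it would in isolation. -/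
theorem subnet_step_agrees {P T E : Type} [Fintype P] [Fintype T]
    (N : SyncPN P T E) (hdet : deterministic N)
    (Ps : Finset P) (Ts : Finset T) (ins outs : T → P)
    (hin : ∀ t ∈ Ts, ins t ∈ Ps)
    (hout : ∀ t ∈ Ts, outs t ∈ Ps)
    (hPre : ∀ t ∈ Ts, ∀ p ∈ Ps, N.Pre p t = if p = ins t then 1 else 0)
    (hPost : ∀ t ∈ Ts, ∀ p ∈ Ps, N.Post p t = if p = outs t then 1 else 0)
    (hTz : ∀ t ∉ Ts, ∀ p ∈ Ps, N.Pre p t = 0 ∧ N.Post p t = 0)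
    (e : E)
    (hii : ∀ t ∈ Ts, N.f t = e → ∀ p ∉ Ps, N.Pre p t = 0) :
    ∀ (M : P → ℕ) (p : P) (hp : p ∈ Ps),
      step N M e p =
        step (subSM Ps Ts ins outs N.f) (fun q => M q) e ⟨p, hp⟩ := by
  intro M p hp
  have hfire : ∀ t : {t // t ∈ Ts}, (N.f t = e ∧ enabled N M t) ↔
      ((subSM Ps Ts ins outs N.f).f t = e ∧
        enabled (subSM Ps Ts ins outs N.f) (fun q => M q) t) := fun t =>
    and_congr_right fun hf =>
      enabled_iff_enabled_subSM N Ps Ts ins outs hPre M t (hii t t.2 hf)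
  unfold step
  congr 1
  · congr 1
    refine Finset.sum_univ_eq_sum_subtype_of_eq_zero Ts _ _ (fun t ht => ?_) fun t => ?_
    · simp [(hTz t ht p hp).2]
    · exact if_congr (hfire t) (hPost t t.2 p hp) rfl
  · refine Finset.sum_univ_eq_sum_subtype_of_eq_zero Ts _ _ (fun t ht => ?_) fun t => ?_
    · simp [(hTz t ht p hp).1]
    · exact if_congr (hfire t) (hPre t t.2 p hp) rfl
end
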